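/- arXiv:1412.0263 — 3 statements merged into one kernel-verified Lean document; each statement's English description precedes it below -/
import Mathlib

section
/- Let f₊ : ℝ → ℝ be three times continuously differentiable with a nondegenerate maximum at x_M > 0, i.e., f₊'(x_M) = 0 and f₊''(x_M) < 0, and let g : ℝ³ → ℝ be continuously differentiable (arguments written g(x, y, λ)) with g_x(x_M, f₊(x_M), x_M) > 0. Then for every δ > 0 there exists ε₀ > 0 such that for all ε ∈ (0, ε₀) there exists λ_H with |λ_H - x_M| < δ such that the linearization J = [[f₊'(λ_H), -1], [ε·g_x(λ_H, f₊(λ_H), λ_H), ε·g_y(λ_H, f₊(λ_H), λ_H)]] of the system ẋ = -y + f₊(x), ẏ = ε g(x, y, λ) at the equilibrium (λ_H, f₊(λ_H)) satisfies trace(J) = f₊'(λ_H) + ε·g_y(λ_H, f₊(λ_H), λ_H) = 0 and det(J) = ε·(f₊'(λ_H)·g_y(λ_H, f₊(λ_H), λ_H) + g_x(λ_H, f₊(λ_H), λ_H)) > 0; in particular J has a pair of purely imaginary, nonzero complex eigenvalues (a Hopf bifurcation point near the smooth fold x_M). -/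
lemma hopf_aux_roots (a b c ω : ℝ) (htr : a + c = 0) (hw : ω ^ 2 = a * c + b) :
    (Matrix.charpoly ((!![a, -1; b, c]).map Complex.ofReal)).IsRoot (Complex.I * ω) ∧
    (Matrix.charpoly ((!![a, -1; b, c]).map Complex.ofReal)).IsRoot (-(Complex.I * ω)) := by
  have h1 : (a : ℂ) + c = 0 := by exact_mod_cast htr
  have h2 : (ω : ℂ) ^ 2 = a * c + b := by exact_mod_cast hw
  constructor
  · simp only [Polynomial.IsRoot, Matrix.charpoly_fin_two, Matrix.trace_fin_two, Matrix.det_fin_two]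
    simp [mul_pow]
    linear_combination - h2 - (Complex.I * ω) * h1
  · simp only [Polynomial.IsRoot, Matrix.charpoly_fin_two, Matrix.trace_fin_two, Matrix.det_fin_two]
    simp [mul_pow]
    linear_combination - h2 + (Complex.I * ω) * h1

lemma hopf_aux_sign (h : ℝ → ℝ) (x η : ℝ) (hη : 0 < η) (h0 : h x = 0)
    (hd : deriv h x < 0) :
    ∃ a b, x - η < a ∧ a < x ∧ x < b ∧ b < x + η ∧ 0 < h a ∧ h b < 0 := by
  have hdiff : DifferentiableAt ℝ h x := differentiableAt_of_deriv_ne_zero hd.ne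
  have ht := (hasDerivAt_iff_tendsto_slope.1 hdiff.hasDerivAt).eventually (gt_mem_nhds hd)
  rw [eventually_nhdsWithin_iff, Metric.eventually_nhds_iff] at ht
  obtain ⟨r, hr, H⟩ := ht
  have hm : 0 < min r η := lt_min hr hη
  have hm1 := min_le_left r η
  have hm2 := min_le_right r η
  refine ⟨x - min r η / 2, x + min r η / 2, by linarith, by linarith, by linarith,
    by linarith, ?_, ?_⟩
  · have := @H (x - min r η / 2) (by rw [Real.dist_eq, abs_lt]; constructor <;> linarith)
      (by simp; linarith)
    rw [slope_def_field, h0, div_neg_iff] at this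
    rcases this with h | h <;> linarith [h.1, h.2]
  · have := @H (x + min r η / 2) (by rw [Real.dist_eq, abs_lt]; constructor <;> linarith)
      (by simp; linarith)
    rw [slope_def_field, h0, div_neg_iff] at this
    rcases this with h | h <;> linarith [h.1, h.2]

/-- Hopf bifurcation near the smooth fold.  If `f₊` (written `fp`) is `C³` with a
nondegenerate maximum at `x_M > 0` and `g_x(x_M, f₊(x_M), x_M) > 0`, then for every `δ > 0`
there is `ε₀ > 0` such that for all `ε ∈ (0, ε₀)` there exists `λ_H` with `|λ_H - x_M| < δ`
at which the linearization `J = [[f₊'(λ_H), -1], [ε g_x, ε g_y]]` has zero trace and positive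
determinant; in particular `J` has a pair of purely imaginary, nonzero complex eigenvalues. -/
theorem hopf_bifurcation_near_smooth_fold
    (fp : ℝ → ℝ) (g : ℝ × ℝ × ℝ → ℝ)
    (hfp : ContDiff ℝ 3 fp) (hg : ContDiff ℝ 1 g)
    (x_M : ℝ) (hxM : 0 < x_M)
    (hcrit : deriv fp x_M = 0) (hnondeg : deriv (deriv fp) x_M < 0)
    (hgx : 0 < fderiv ℝ g (x_M, fp x_M, x_M) (1, 0, 0)) :
    ∀ δ > (0 : ℝ), ∃ ε₀ > (0 : ℝ), ∀ ε ∈ Set.Ioo (0 : ℝ) ε₀, ∃ lamH : ℝ,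
      |lamH - x_M| < δ ∧
      -- trace(J) = f₊'(λ_H) + ε g_y = 0
      deriv fp lamH + ε * fderiv ℝ g (lamH, fp lamH, lamH) (0, 1, 0) = 0 ∧
      -- det(J) = ε (f₊'(λ_H) g_y + g_x) > 0
      0 < ε * (deriv fp lamH * fderiv ℝ g (lamH, fp lamH, lamH) (0, 1, 0)
               + fderiv ℝ g (lamH, fp lamH, lamH) (1, 0, 0)) ∧
      -- J has a pair of purely imaginary, nonzero complex eigenvalues ± i ω
      ∃ ω : ℝ, ω ≠ 0 ∧
        (Matrix.charpoly ((!![deriv fp lamH, -1;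
            ε * fderiv ℝ g (lamH, fp lamH, lamH) (1, 0, 0),
            ε * fderiv ℝ g (lamH, fp lamH, lamH) (0, 1, 0)]).map
          Complex.ofReal)).IsRoot (Complex.I * ω) ∧
        (Matrix.charpoly ((!![deriv fp lamH, -1;
            ε * fderiv ℝ g (lamH, fp lamH, lamH) (1, 0, 0),
            ε * fderiv ℝ g (lamH, fp lamH, lamH) (0, 1, 0)]).map
          Complex.ofReal)).IsRoot (-(Complex.I * ω)) := by
  intro δ hδ
  have hh : Continuous (deriv fp) := hfp.continuous_deriv (by norm_num)
  have hf : Continuous fp := hfp.continuous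
  have hg' : Continuous (fderiv ℝ g) := hg.continuous_fderiv (by norm_num)
  have hG : Continuous fun l : ℝ => fderiv ℝ g (l, fp l, l) (0, 1, 0) := by fun_prop
  have hK : Continuous fun l : ℝ => fderiv ℝ g (l, fp l, l) (1, 0, 0) := by fun_prop
  have hroots := hopf_aux_roots
  generalize hGd : (fun l : ℝ => fderiv ℝ g (l, fp l, l) (0, 1, 0)) = G at hG
  generalize hKd : (fun l : ℝ => fderiv ℝ g (l, fp l, l) (1, 0, 0)) = K at hK
  have hGe : ∀ l, fderiv ℝ g (l, fp l, l) (0, 1, 0) = G l := fun l => by rw [← hGd]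
  have hKe : ∀ l, fderiv ℝ g (l, fp l, l) (1, 0, 0) = K l := fun l => by rw [← hKd]
  simp only [hGe, hKe] at hgx ⊢
  have hD : Continuous fun l => deriv fp l * G l + K l := by fun_prop
  have hev : ∀ᶠ l in nhds x_M, 0 < deriv fp l * G l + K l :=
    hD.continuousAt.eventually (lt_mem_nhds (by simpa [hcrit] using hgx))
  obtain ⟨r, hr, H⟩ := Metric.eventually_nhds_iff.1 hev
  obtain ⟨a, b, ha1, ha2, hb1, hb2, ha, hb⟩ :=
    hopf_aux_sign (deriv fp) x_M (min r δ) (lt_min hr hδ) hcrit hnondeg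
  have hm1 := min_le_left r δ
  have hm2 := min_le_right r δ
  have ea : ∀ᶠ ε in nhds (0 : ℝ), 0 < deriv fp a + ε * G a :=
    (by fun_prop : Continuous fun ε : ℝ => deriv fp a + ε * G a).continuousAt.eventually
      (lt_mem_nhds (by simpa using ha))
  have eb : ∀ᶠ ε in nhds (0 : ℝ), deriv fp b + ε * G b < 0 :=
    (by fun_prop : Continuous fun ε : ℝ => deriv fp b + ε * G b).continuousAt.eventually
      (gt_mem_nhds (by simpa using hb))
  obtain ⟨ε₀, hε₀, E⟩ := Metric.eventually_nhds_iff.1 (ea.and eb)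
  refine ⟨ε₀, hε₀, fun ε hε => ?_⟩
  obtain ⟨h1, h2⟩ := @E ε (by rw [Real.dist_eq, sub_zero, abs_of_pos hε.1]; exact hε.2)
  have hab : a ≤ b := by linarith
  obtain ⟨l, hl, hl0⟩ := intermediate_value_Icc' hab
    (by fun_prop : Continuous fun l => deriv fp l + ε * G l).continuousOn
    (show (0 : ℝ) ∈ Set.Icc _ _ from ⟨h2.le, h1.le⟩)
  have hpos := @H l (by rw [Real.dist_eq, abs_lt]; constructor <;> linarith [hl.1, hl.2])
  have hdet : 0 < ε * (deriv fp l * G l + K l) := mul_pos hε.1 hpos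
  refine ⟨l, by rw [abs_lt]; constructor <;> linarith [hl.1, hl.2], hl0, hdet,
    Real.sqrt (ε * (deriv fp l * G l + K l)), (Real.sqrt_pos.2 hdet).ne', ?_⟩
  apply hroots _ _ _ _ hl0
  rw [Real.sq_sqrt hdet.le]
  ring
end

section
/- Let f₋ : ℝ → ℝ be continuously differentiable with f₋(0) = 0 and f₋'(0) < 0, let g : ℝ³ → ℝ be continuously differentiable (arguments written g(x, y, λ)), and let ε > 0. Define h(λ) = f₋'(λ) + ε·g_y(λ, f₋(λ), λ). Suppose h(0) > 0 (i.e., α₋ = f₋'(0) + ε g_y(0,0,0) > 0), there exists λ⋆ < 0 with h(λ⋆) < 0, and g_x(λ, f₋(λ), λ) + f₋'(λ)·g_y(λ, f₋(λ), λ) > 0 for all λ ∈ [λ⋆, 0]. Then there exists λ₀ ∈ (λ⋆, 0) such that the matrix J = [[f₋'(λ₀), -1], [ε·g_x(λ₀, f₋(λ₀), λ₀), ε·g_y(λ₀, f₋(λ₀), λ₀)]] has trace zero and positive determinant; in particular J has a pair of purely imaginary nonzero complex eigenvalues, so the bifurcation at the corner for α₋ > 0 occurs as a smooth Hopf bifurcation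 at a negative parameter value λ₀ < 0. -/
theorem hopf_root_aux (a c d : ℝ) (z : ℂ) (ht : a + d = 0)
    (hz : z ^ 2 = -((a * d + c : ℝ) : ℂ)) :
    (Matrix.charpoly ((!![a, -1; c, d]).map Complex.ofReal)).IsRoot z := by
  have ht' : (a : ℂ) + d = 0 := by exact_mod_cast ht
  push_cast at hz
  rw [Polynomial.IsRoot.def, Matrix.charpoly_fin_two]
  simp [Matrix.trace_fin_two, Matrix.det_fin_two]
  linear_combination hz - z * ht'

/-- smooth Hopf bifurcation to the left of the corner when `α₋ > 0`.  With
`h(λ) = f₋'(λ) + ε g_y(λ, f₋(λ), λ)` (here `fm = f₋`), if `h(0) > 0`, `h(λ⋆) < 0` for some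
`λ⋆ < 0`, and `g_x + f₋' g_y > 0` on `[λ⋆, 0]`, then there is `λ₀ ∈ (λ⋆, 0)` at which the
linearization `J = [[f₋'(λ₀), -1], [ε g_x, ε g_y]]` has zero trace and positive determinant;
in particular `J` has a pair of purely imaginary nonzero complex eigenvalues. -/
theorem corner_hopf_left
    (fm : ℝ → ℝ) (g : ℝ × ℝ × ℝ → ℝ)
    (hfm : ContDiff ℝ 1 fm) (hg : ContDiff ℝ 1 g)
    (hfm0 : fm 0 = 0) (hfm'0 : deriv fm 0 < 0)
    (ε : ℝ) (hε : 0 < ε)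
    (h : ℝ → ℝ)
    (hh : ∀ l, h l = deriv fm l + ε * fderiv ℝ g (l, fm l, l) (0, 1, 0))
    (hh0 : 0 < h 0)
    (lamS : ℝ) (hlamS : lamS < 0) (hhlamS : h lamS < 0)
    (hdet : ∀ l ∈ Set.Icc lamS (0 : ℝ),
      0 < fderiv ℝ g (l, fm l, l) (1, 0, 0)
          + deriv fm l * fderiv ℝ g (l, fm l, l) (0, 1, 0)) :
    ∃ lam₀ ∈ Set.Ioo lamS (0 : ℝ),
      -- trace(J) = 0
      deriv fm lam₀ + ε * fderiv ℝ g (lam₀, fm lam₀, lam₀) (0, 1, 0) = 0 ∧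
      -- det(J) = ε (g_x + f₋'(λ₀) g_y) > 0
      0 < ε * (fderiv ℝ g (lam₀, fm lam₀, lam₀) (1, 0, 0)
          + deriv fm lam₀ * fderiv ℝ g (lam₀, fm lam₀, lam₀) (0, 1, 0)) ∧
      -- J has a pair of purely imaginary nonzero complex eigenvalues ± i ω
      ∃ ω : ℝ, ω ≠ 0 ∧
        (Matrix.charpoly ((!![deriv fm lam₀, -1;
            ε * fderiv ℝ g (lam₀, fm lam₀, lam₀) (1, 0, 0),
            ε * fderiv ℝ g (lam₀, fm lam₀, lam₀) (0, 1, 0)]).map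
          Complex.ofReal)).IsRoot (Complex.I * ω) ∧
        (Matrix.charpoly ((!![deriv fm lam₀, -1;
            ε * fderiv ℝ g (lam₀, fm lam₀, lam₀) (1, 0, 0),
            ε * fderiv ℝ g (lam₀, fm lam₀, lam₀) (0, 1, 0)]).map
          Complex.ofReal)).IsRoot (-(Complex.I * ω)) := by
  have hcont : Continuous h := by
    have e : h = fun l => deriv fm l + ε * fderiv ℝ g (l, fm l, l) (0, 1, 0) := funext hh
    have h1 : Continuous (deriv fm) := hfm.continuous_deriv le_rfl
    have h2 : Continuous (fderiv ℝ g) := hg.continuous_fderiv one_ne_zero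
    have h3 : Continuous fm := hfm.continuous
    rw [e]
    have h4 : Continuous fun l : ℝ => fderiv ℝ g (l, fm l, l) :=
      h2.comp (by fun_prop)
    exact h1.add (continuous_const.mul (h4.clm_apply continuous_const))
  obtain ⟨l, hl, hl0⟩ := intermediate_value_Ioo hlamS.le hcont.continuousOn ⟨hhlamS, hh0⟩
  rw [hh] at hl0
  have hd := mul_pos hε (hdet l ⟨hl.1.le, hl.2.le⟩)
  refine ⟨l, hl, hl0, hd, Real.sqrt _, (Real.sqrt_pos.mpr hd).ne', ?_, ?_⟩
  all_goals
    apply hopf_root_aux _ _ _ _ hl0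
    have hs := Real.sq_sqrt hd.le
    first
      | rw [neg_sq, mul_pow, Complex.I_sq, ← Complex.ofReal_pow, hs]
      | rw [mul_pow, Complex.I_sq, ← Complex.ofReal_pow, hs]
    push_cast
    ring
end

section
/- Let f₊ : ℝ → ℝ be continuously differentiable with f₊(0) = 0 and f₊'(0) > 0, let g : ℝ³ → ℝ be continuously differentiable (arguments written g(x, y, λ)), and let ε > 0. Define h(λ) = f₊'(λ) + ε·g_y(λ, f₊(λ), λ). Suppose h(0) < 0 (i.e., α₊ = f₊'(0) + ε g_y(0,0,0) < 0), there exists λ⋆ > 0 with h(λ⋆) > 0, and g_x(λ, f₊(λ), λ) + f₊'(λ)·g_y(λ, f₊(λ), λ) > 0 for all λ ∈ [0, λ⋆]. Then there exists λ₀ ∈ (0, λ⋆) such that the matrix J = [[f₊'(λ₀), -1], [ε·g_x(λ₀, f₊(λ₀), λ₀), ε·g_y(λ₀, f₊(λ₀), λ₀)]] has trace zero and positive determinant; in particular J has a pair of purely imaginary nonzero complex eigenvalues, so the bifurcation at the corner for α₊ < 0 occurs as a smooth Hopf bifurcation at a positive parameter value λ₀ > 0. -/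
theorem isRoot_aux (a c d : ℝ) (z : ℂ) (hz : z ^ 2 - (a + d) * z + (a * d + c) = 0) :
    (Matrix.charpoly ((!![a, -1; c, d]).map Complex.ofReal)).IsRoot z := by
  rw [Matrix.charpoly_fin_two]
  simp [Polynomial.IsRoot, Matrix.trace_fin_two, Matrix.det_fin_two]
  linear_combination hz

/-- smooth Hopf bifurcation to the right of the corner when `α₊ < 0`.  With
`h(λ) = f₊'(λ) + ε g_y(λ, f₊(λ), λ)` (here `fp = f₊`), if `h(0) < 0`, `h(λ⋆) > 0` for some
`λ⋆ > 0`, and `g_x + f₊' g_y > 0` on `[0, λ⋆]`, then there is `λ₀ ∈ (0, λ⋆)` at which the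
linearization `J = [[f₊'(λ₀), -1], [ε g_x, ε g_y]]` has zero trace and positive determinant;
in particular `J` has a pair of purely imaginary nonzero complex eigenvalues. -/
theorem corner_hopf_right
    (fp : ℝ → ℝ) (g : ℝ × ℝ × ℝ → ℝ)
    (hfp : ContDiff ℝ 1 fp) (hg : ContDiff ℝ 1 g)
    (hfp0 : fp 0 = 0) (hfp'0 : 0 < deriv fp 0)
    (ε : ℝ) (hε : 0 < ε)
    (h : ℝ → ℝ)
    (hh : ∀ l, h l = deriv fp l + ε * fderiv ℝ g (l, fp l, l) (0, 1, 0))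
    (hh0 : h 0 < 0)
    (lamS : ℝ) (hlamS : 0 < lamS) (hhlamS : 0 < h lamS)
    (hdet : ∀ l ∈ Set.Icc (0 : ℝ) lamS,
      0 < fderiv ℝ g (l, fp l, l) (1, 0, 0)
          + deriv fp l * fderiv ℝ g (l, fp l, l) (0, 1, 0)) :
    ∃ lam₀ ∈ Set.Ioo (0 : ℝ) lamS,
      -- trace(J) = 0
      deriv fp lam₀ + ε * fderiv ℝ g (lam₀, fp lam₀, lam₀) (0, 1, 0) = 0 ∧
      -- det(J) = ε (g_x + f₊'(λ₀) g_y) > 0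
      0 < ε * (fderiv ℝ g (lam₀, fp lam₀, lam₀) (1, 0, 0)
          + deriv fp lam₀ * fderiv ℝ g (lam₀, fp lam₀, lam₀) (0, 1, 0)) ∧
      -- J has a pair of purely imaginary nonzero complex eigenvalues ± i ω
      ∃ ω : ℝ, ω ≠ 0 ∧
        (Matrix.charpoly ((!![deriv fp lam₀, -1;
            ε * fderiv ℝ g (lam₀, fp lam₀, lam₀) (1, 0, 0),
            ε * fderiv ℝ g (lam₀, fp lam₀, lam₀) (0, 1, 0)]).map
          Complex.ofReal)).IsRoot (Complex.I * ω) ∧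
        (Matrix.charpoly ((!![deriv fp lam₀, -1;
            ε * fderiv ℝ g (lam₀, fp lam₀, lam₀) (1, 0, 0),
            ε * fderiv ℝ g (lam₀, fp lam₀, lam₀) (0, 1, 0)]).map
          Complex.ofReal)).IsRoot (-(Complex.I * ω)) := by
  have hcont : Continuous h := by
    have h1 : Continuous (deriv fp) := hfp.continuous_deriv le_rfl
    have h2 : Continuous (fderiv ℝ g) := hg.continuous_fderiv (by norm_num)
    have h3 : Continuous fp := hfp.continuous
    have h4 : h = fun l => deriv fp l + ε * fderiv ℝ g (l, fp l, l) (0, 1, 0) := funext hh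
    rw [h4]
    have h5 : Continuous fun l : ℝ => fderiv ℝ g (l, fp l, l) :=
      h2.comp (continuous_id.prodMk (h3.prodMk continuous_id))
    exact h1.add (continuous_const.mul (h5.clm_apply continuous_const))
  obtain ⟨l, hl, hl0⟩ := intermediate_value_Ioo hlamS.le hcont.continuousOn
    (show (0 : ℝ) ∈ Set.Ioo (h 0) (h lamS) from ⟨hh0, hhlamS⟩)
  have htr := hh l
  rw [hl0] at htr
  have hd := mul_pos hε (hdet l ⟨hl.1.le, hl.2.le⟩)
  refine ⟨l, hl, htr.symm, hd, ?_⟩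
  generalize fderiv ℝ g (l, fp l, l) (1, 0, 0) = p at *
  generalize fderiv ℝ g (l, fp l, l) (0, 1, 0) = q at *
  generalize deriv fp l = a at *
  have hw := Real.sq_sqrt hd.le
  refine ⟨√(ε * (p + a * q)), (Real.sqrt_pos.2 hd).ne', ?_, ?_⟩
  all_goals
    generalize √(ε * (p + a * q)) = w at *
    apply isRoot_aux
    have hw' : (w : ℂ) ^ 2 = ε * (p + a * q) := by exact_mod_cast hw
    have ht' : (0 : ℂ) = a + ε * q := by exact_mod_cast htr
    push_cast
  · linear_combination (w : ℂ) ^ 2 * Complex.I_sq - hw' + Complex.I * w * ht'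
  · linear_combination (w : ℂ) ^ 2 * Complex.I_sq - hw' - Complex.I * w * ht'
end
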